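/- arXiv:2004.02223 — 2 statements merged into one kernel-verified Lean document; each statement's English description precedes it below -/
import Mathlib

section
/- Let U ⊆ ℝ⁸ be open, let ρ_{mn} : U → ℝ be differentiable and Γ_{mnP} : U → ℝ be functions for internal indices m,n ∈ {4,…,8} and P ∈ {1,…,8}, and let G⁴⁴ = G⁵⁵ > 0 and G⁶⁶ = G⁷⁷ = G⁸⁸ > 0 be real constants with g := √((G⁴⁴)²+(G⁵⁵)²). Write Γ^m_{nP} := G^{mm}Γ_{mnP} (no sum) and define the internal covariant derivative ρ_{mn;P} := ∂_Pρ_{mn} − Σ_{h=4}^{8}(ρ_{hn}Γ^h_{mP} + ρ_{mh}Γ^h_{nP}). Assume: (a) Γ_{54P} = Γ_{45P} and Γ_{66P}+Γ_{77P}+Γ_{88P} = 0; (b) there exist real constants with Γ^6_{4P} = c⁶₅Γ^5_{4P}, Γ^7_{4P} = c⁷₅Γ^5_{4P}, Γ^8_{4P} = c⁸₅Γ^5_{4P}, Γ^6_{5P} = c⁶₄Γ^4_{5P}, Γ^7_{5P} = c⁷₄Γ^4_{5P}, Γ^8_{5P} = c⁸₄Γ^4_{5P}, and c⁶₅ = c⁶₄,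 c⁷₅ = c⁷₄, c⁸₅ = c⁸₄; (c) ρ₆₅ = ρ₆₄, ρ₇₅ = ρ₇₄, ρ₈₅ = ρ₈₄, ρ₅₆ = ρ₄₆, ρ₅₇ = ρ₄₇, ρ₅₈ = ρ₄₈. Define l_L := (ρ₄₄+ρ₅₅)/√2, l_R := (ρ₄₄−ρ₅₅)/√2, ν_L := (ρ₅₄+ρ₄₅)/√2, ν_R := (ρ₅₄−ρ₄₅)/√2, with l_{L;P} := (ρ_{44;P}+ρ_{55;P})/√2, l_{R;P} := (ρ_{44;P}−ρ_{55;P})/√2, ν_{L;P} := (ρ_{54;P}+ρ_{45;P})/√2, ν_{R;P} := (ρ_{54;P}−ρ_{45;P})/√2; gauge potentials Z_P := (Γ_{44P}+Γ_{55P})/√2, A_P := (Γ_{44P}−Γ_{55P})/√2, W¹_P := (Γ_{45P}+Γ_{54P})/√2; and the mixed lepton fields l′_L := l_L + (1/(2√2))[c⁶₄(ρ₆₄+ρ₄₆) + c⁷₄(ρ₇₄+ρ₄₇) + c⁸₄(ρ₈₄+ρ₄₈) + c⁶₅(ρ₆₅+ρ₅₆) + c⁷₅(ρ₇₅+ρ₅₇)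 + c⁸₅(ρ₈₅+ρ₅₈)] and ν′_L := ν_L + (1/(2√2))[c⁶₅(ρ₆₄+ρ₄₆) + c⁷₅(ρ₇₄+ρ₄₇) + c⁸₅(ρ₈₄+ρ₄₈) + c⁶₄(ρ₆₅+ρ₅₆) + c⁷₄(ρ₇₅+ρ₅₇) + c⁸₄(ρ₈₅+ρ₅₈)]. Then on U, for all P: l_{L;P} = ∂_Pl_L − g·l_L·Z_P − g·l_R·A_P − g·ν′_L·W¹_P; l_{R;P} = ∂_Pl_R − g·l_R·Z_P − g·l_L·A_P; ν_{L;P} = ∂_Pν_L − g·ν_L·Z_P − g·l′_L·W¹_P; ν_{R;P} = ∂_Pν_R − g·ν_R·Z_P. -/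
noncomputable section

/-- Partial derivative in the `P`-th coordinate direction of `ℝ⁸`. -/
def pd (P : Fin 8) (f : (Fin 8 → ℝ) → ℝ) (x : Fin 8 → ℝ) : ℝ :=
  fderiv ℝ f x (Pi.single P 1)

/-- Internal covariant derivative
`ρ_{mn;P} := ∂_P ρ_{mn} − Σ_h (ρ_{hn} Γ^h_{mP} + ρ_{mh} Γ^h_{nP})`, with
`Γ^h_{mP} := G^{hh} Γ_{hmP}` (no sum); internal index `i : Fin 5` corresponds
to the coordinate direction `4 + i` (so `0 ↦ 4, …, 4 ↦ 8`). -/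
def covD (Ginv : Fin 5 → ℝ) (Γ : Fin 5 → Fin 5 → Fin 8 → (Fin 8 → ℝ) → ℝ)
    (ρ : Fin 5 → Fin 5 → (Fin 8 → ℝ) → ℝ) (m n : Fin 5) (P : Fin 8)
    (x : Fin 8 → ℝ) : ℝ :=
  pd P (ρ m n) x
    - ∑ h : Fin 5, (ρ h n x * (Ginv h * Γ h m P x) + ρ m h x * (Ginv h * Γ h n P x))

/-- **PMNS mixing in the affine connection representation** (𝔇 = 8,
internal indices `0,…,4 ↦ 4,…,8`): under the basic symmetry conditions (a)
and the first (b) and second (c) conditions of PMNS mixing, the lepton fields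
satisfy the stated evolution equations with the mixed fields `l′_L`, `ν′_L`. -/
theorem stmt_5
    (U : Set (Fin 8 → ℝ)) (hU : IsOpen U)
    (ρ : Fin 5 → Fin 5 → (Fin 8 → ℝ) → ℝ)
    (hρ : ∀ m n, ∀ x ∈ U, DifferentiableAt ℝ (ρ m n) x)
    (Γ : Fin 5 → Fin 5 → Fin 8 → (Fin 8 → ℝ) → ℝ)
    (G4 G5 G6 G7 G8 : ℝ) (hG45 : G4 = G5) (hG67 : G6 = G7) (hG78 : G7 = G8)
    (hG4pos : 0 < G4) (hG6pos : 0 < G6)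
    (g : ℝ) (hg : g = Real.sqrt (G4 ^ 2 + G5 ^ 2))
    (Ginv : Fin 5 → ℝ) (hGinv : Ginv = ![G4, G5, G6, G7, G8])
    -- (a) basic symmetry conditions
    (ha1 : ∀ P : Fin 8, ∀ x ∈ U, Γ 1 0 P x = Γ 0 1 P x)
    (ha2 : ∀ P : Fin 8, ∀ x ∈ U, Γ 2 2 P x + Γ 3 3 P x + Γ 4 4 P x = 0)
    -- (b) first conditions of PMNS mixing (Γ^m_{nP} := G^{mm} Γ_{mnP})
    (c64 c74 c84 c65 c75 c85 : ℝ)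
    (hb1 : ∀ P : Fin 8, ∀ x ∈ U, Ginv 2 * Γ 2 0 P x = c65 * (Ginv 1 * Γ 1 0 P x))
    (hb2 : ∀ P : Fin 8, ∀ x ∈ U, Ginv 3 * Γ 3 0 P x = c75 * (Ginv 1 * Γ 1 0 P x))
    (hb3 : ∀ P : Fin 8, ∀ x ∈ U, Ginv 4 * Γ 4 0 P x = c85 * (Ginv 1 * Γ 1 0 P x))
    (hb4 : ∀ P : Fin 8, ∀ x ∈ U, Ginv 2 * Γ 2 1 P x = c64 * (Ginv 0 * Γ 0 1 P x))
    (hb5 : ∀ P : Fin 8, ∀ x ∈ U, Ginv 3 * Γ 3 1 P x = c74 * (Ginv 0 * Γ 0 1 P x))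
    (hb6 : ∀ P : Fin 8, ∀ x ∈ U, Ginv 4 * Γ 4 1 P x = c84 * (Ginv 0 * Γ 0 1 P x))
    (hc64 : c65 = c64) (hc74 : c75 = c74) (hc84 : c85 = c84)
    -- (c) second conditions of PMNS mixing
    (hr1 : ∀ x, ρ 2 1 x = ρ 2 0 x) (hr2 : ∀ x, ρ 3 1 x = ρ 3 0 x)
    (hr3 : ∀ x, ρ 4 1 x = ρ 4 0 x)
    (hr4 : ∀ x, ρ 1 2 x = ρ 0 2 x) (hr5 : ∀ x, ρ 1 3 x = ρ 0 3 x)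
    (hr6 : ∀ x, ρ 1 4 x = ρ 0 4 x)
    -- lepton fields
    (lL lR νL νR l'L ν'L : (Fin 8 → ℝ) → ℝ)
    (hlL : ∀ x, lL x = (ρ 0 0 x + ρ 1 1 x) / Real.sqrt 2)
    (hlR : ∀ x, lR x = (ρ 0 0 x - ρ 1 1 x) / Real.sqrt 2)
    (hνL : ∀ x, νL x = (ρ 1 0 x + ρ 0 1 x) / Real.sqrt 2)
    (hνR : ∀ x, νR x = (ρ 1 0 x - ρ 0 1 x) / Real.sqrt 2)
    (hl' : ∀ x, l'L x = lL x + (1 / (2 * Real.sqrt 2)) *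
      (c64 * (ρ 2 0 x + ρ 0 2 x) + c74 * (ρ 3 0 x + ρ 0 3 x)
        + c84 * (ρ 4 0 x + ρ 0 4 x) + c65 * (ρ 2 1 x + ρ 1 2 x)
        + c75 * (ρ 3 1 x + ρ 1 3 x) + c85 * (ρ 4 1 x + ρ 1 4 x)))
    (hν' : ∀ x, ν'L x = νL x + (1 / (2 * Real.sqrt 2)) *
      (c65 * (ρ 2 0 x + ρ 0 2 x) + c75 * (ρ 3 0 x + ρ 0 3 x)
        + c85 * (ρ 4 0 x + ρ 0 4 x) + c64 * (ρ 2 1 x + ρ 1 2 x)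
        + c74 * (ρ 3 1 x + ρ 1 3 x) + c84 * (ρ 4 1 x + ρ 1 4 x)))
    -- gauge potentials
    (Z A W1 : Fin 8 → (Fin 8 → ℝ) → ℝ)
    (hZ : ∀ P x, Z P x = (Γ 0 0 P x + Γ 1 1 P x) / Real.sqrt 2)
    (hA : ∀ P x, A P x = (Γ 0 0 P x - Γ 1 1 P x) / Real.sqrt 2)
    (hW1 : ∀ P x, W1 P x = (Γ 0 1 P x + Γ 1 0 P x) / Real.sqrt 2) :
    ∀ x ∈ U, ∀ P : Fin 8,
      (covD Ginv Γ ρ 0 0 P x + covD Ginv Γ ρ 1 1 P x) / Real.sqrt 2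
          = pd P lL x - g * lL x * Z P x - g * lR x * A P x - g * ν'L x * W1 P x ∧
      (covD Ginv Γ ρ 0 0 P x - covD Ginv Γ ρ 1 1 P x) / Real.sqrt 2
          = pd P lR x - g * lR x * Z P x - g * lL x * A P x ∧
      (covD Ginv Γ ρ 1 0 P x + covD Ginv Γ ρ 0 1 P x) / Real.sqrt 2
          = pd P νL x - g * νL x * Z P x - g * l'L x * W1 P x ∧
      (covD Ginv Γ ρ 1 0 P x - covD Ginv Γ ρ 0 1 P x) / Real.sqrt 2
          = pd P νR x - g * νR x * Z P x := by
  intro x hx P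
  subst hG45 hG67 hG78 hc64 hc74 hc84
  have h2 : Real.sqrt 2 * Real.sqrt 2 = 2 := Real.mul_self_sqrt (by norm_num)
  have hg' : g = Real.sqrt 2 * G4 := by
    rw [hg, show G4 ^ 2 + G4 ^ 2 = 2 * G4 ^ 2 by ring, Real.sqrt_mul (by norm_num),
      Real.sqrt_sq hG4pos.le]
  have hne : Real.sqrt 2 ≠ 0 := by positivity
  have hadd : ∀ (f a b : (Fin 8 → ℝ) → ℝ), DifferentiableAt ℝ a x → DifferentiableAt ℝ b x →
      (∀ y, f y = (a y + b y) / Real.sqrt 2) → pd P f x = (pd P a x + pd P b x) / Real.sqrt 2 := by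
    intro f a b da db h
    have hf : HasFDerivAt f ((Real.sqrt 2)⁻¹ • (fderiv ℝ a x + fderiv ℝ b x)) x := by
      have h0 := (da.hasFDerivAt.add db.hasFDerivAt).const_smul (Real.sqrt 2)⁻¹
      refine h0.congr_of_eventuallyEq (Filter.Eventually.of_forall fun y => ?_)
      simp [h y, div_eq_inv_mul]
    simp [pd, hf.fderiv, div_eq_inv_mul, mul_add, mul_sub]
  have hsub : ∀ (f a b : (Fin 8 → ℝ) → ℝ), DifferentiableAt ℝ a x → DifferentiableAt ℝ b x →
      (∀ y, f y = (a y - b y) / Real.sqrt 2) → pd P f x = (pd P a x - pd P b x) / Real.sqrt 2 := by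
    intro f a b da db h
    have hf : HasFDerivAt f ((Real.sqrt 2)⁻¹ • (fderiv ℝ a x - fderiv ℝ b x)) x := by
      have h0 := (da.hasFDerivAt.sub db.hasFDerivAt).const_smul (Real.sqrt 2)⁻¹
      refine h0.congr_of_eventuallyEq (Filter.Eventually.of_forall fun y => ?_)
      simp [h y, div_eq_inv_mul]
    simp [pd, hf.fderiv, div_eq_inv_mul, mul_add, mul_sub]
  have e0 : Ginv 0 = G4 := by simp [hGinv]
  have e1 : Ginv 1 = G4 := by simp [hGinv]
  rw [hadd lL _ _ (hρ 0 0 x hx) (hρ 1 1 x hx) hlL, hsub lR _ _ (hρ 0 0 x hx) (hρ 1 1 x hx) hlR,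
    hadd νL _ _ (hρ 1 0 x hx) (hρ 0 1 x hx) hνL, hsub νR _ _ (hρ 1 0 x hx) (hρ 0 1 x hx) hνR]
  simp only [covD, Fin.sum_univ_five, hb1 P x hx, hb2 P x hx, hb3 P x hx, hb4 P x hx, hb5 P x hx,
    hb6 P x hx, e0, e1, ha1 P x hx, hl', hν', hlL, hlR, hνL, hνR, hZ, hA, hW1, hr1, hr2, hr3,
    hr4, hr5, hr6, hg']
  have h2' : Real.sqrt 2 ^ 2 = 2 := by rw [sq, h2]
  generalize Real.sqrt 2 = s at *
  refine ⟨?_, ?_, ?_, ?_⟩ <;> field_simp <;> (try simp only [h2']) <;> ring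

end
end

section
/- Let U ⊆ ℝ⁸ be open, let ρ_{mn} : U → ℝ be differentiable and Γ_{mnP} : U → ℝ be functions for internal indices m,n ∈ {4,…,8} and P ∈ {1,…,8}, and let G⁴⁴ = G⁵⁵ > 0 and G⁶⁶ = G⁷⁷ = G⁸⁸ > 0 be real constants with g := √((G⁴⁴)²+(G⁵⁵)²) and g_s := √((G⁷⁷)²+(G⁸⁸)²). Write Γ^m_{nP} := G^{mm}Γ_{mnP} (no sum) and define ρ_{mn;P} := ∂_Pρ_{mn} − Σ_{h=4}^{8}(ρ_{hn}Γ^h_{mP} + ρ_{mh}Γ^h_{nP}). Assume: (a) Γ_{45P} = Γ_{54P} and Γ_{66P}+Γ_{77P}+Γ_{88P} = 0; (b) there exist real constants with Γ^5_{6P} = c₆⁴Γ^5_{4P}, Γ^5_{7P} = c₇⁴Γ^5_{4P}, Γ^5_{8P} = c₈⁴Γ^5_{4P}, Γ^4_{6P} = c₆⁵Γ^4_{5P}, Γ^4_{7P} = c₇⁵Γ^4_{5P}, Γ^4_{8P} = c₈⁵Γ^4_{5P}, and c₆⁴ = c₇⁴ = c₈⁴, c₆⁵ = c₇⁵ = c₈⁵;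 (c) ρ₆₅ = ρ₇₅ = ρ₈₅, ρ₆₄ = ρ₇₄ = ρ₈₄, ρ₅₆ = ρ₅₇ = ρ₅₈, ρ₄₆ = ρ₄₇ = ρ₄₈. Define d_{1L} := (ρ₆₆+ρ₇₇)/√2, d_{2L} := (ρ₇₇+ρ₈₈)/√2, d_{3L} := (ρ₈₈+ρ₆₆)/√2, d_{1R} := (ρ₆₆−ρ₇₇)/√2, d_{2R} := (ρ₇₇−ρ₈₈)/√2, d_{3R} := (ρ₈₈−ρ₆₆)/√2, u_{1L} := (ρ₆₇+ρ₇₆)/√2, u_{2L} := (ρ₇₈+ρ₈₇)/√2, u_{3L} := (ρ₈₆+ρ₆₈)/√2, u_{1R} := (ρ₆₇−ρ₇₆)/√2, u_{2R} := (ρ₇₈−ρ₈₇)/√2, u_{3R} := (ρ₈₆−ρ₆₈)/√2, with the corresponding ';P' quantities defined by the same linear combinations of ρ_{mn;P} (e.g. d_{1L;P} := (ρ_{66;P}+ρ_{77;P})/√2); gauge potentials U¹_P := (Γ_{66P}+Γ_{77P})/√2, V¹_P := (Γ_{66P}−Γ_{77P})/√2, U²_P := (Γ_{77P}+Γ_{88P})/√2,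 V²_P := (Γ_{77P}−Γ_{88P})/√2, U³_P := (Γ_{88P}+Γ_{66P})/√2, V³_P := (Γ_{88P}−Γ_{66P})/√2, X²³_P := (Γ_{67P}+Γ_{76P})/√2, Y²³_P := (Γ_{67P}−Γ_{76P})/√2, X³¹_P := (Γ_{78P}+Γ_{87P})/√2, Y³¹_P := (Γ_{78P}−Γ_{87P})/√2, X¹²_P := (Γ_{86P}+Γ_{68P})/√2, Y¹²_P := (Γ_{86P}−Γ_{68P})/√2, W¹_P := (Γ_{45P}+Γ_{54P})/√2; and mixing fields d′_{1L} := (1/(2√2))[c₇⁵(ρ₄₆+ρ₆₄) + c₆⁵(ρ₄₇+ρ₇₄) + c₇⁴(ρ₅₆+ρ₆₅) + c₆⁴(ρ₅₇+ρ₇₅)], d′_{2L} := (1/(2√2))[c₈⁵(ρ₄₇+ρ₇₄) + c₇⁵(ρ₄₈+ρ₈₄) + c₈⁴(ρ₅₇+ρ₇₅) + c₇⁴(ρ₅₈+ρ₈₅)], d′_{3L} := (1/(2√2))[c₆⁵(ρ₄₈+ρ₈₄) + c₈⁵(ρ₄₆+ρ₆₄) + c₆⁴(ρ₅₈+ρ₈₅)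 + c₈⁴(ρ₅₆+ρ₆₅)], u′_{1L} := (1/(2√2))[c₆⁵(ρ₄₆+ρ₆₄) + c₆⁴(ρ₅₆+ρ₆₅) + c₇⁵(ρ₄₇+ρ₇₄) + c₇⁴(ρ₅₇+ρ₇₅)], u′_{2L} := (1/(2√2))[c₇⁵(ρ₄₇+ρ₇₄) + c₇⁴(ρ₅₇+ρ₇₅) + c₈⁵(ρ₄₈+ρ₈₄) + c₈⁴(ρ₅₈+ρ₈₅)], u′_{3L} := (1/(2√2))[c₈⁵(ρ₄₈+ρ₈₄) + c₈⁴(ρ₅₈+ρ₈₅) + c₆⁵(ρ₄₆+ρ₆₄) + c₆⁴(ρ₅₆+ρ₆₅)]. Then on U, for all P, the twelve identities hold: d_{1L;P} = ∂_Pd_{1L} − g_s d_{1L}U¹_P + g_s d_{2L}V¹_P − g_s d_{3L}V¹_P − g_s u_{1L}X²³_P − (g_s/2)u_{2L}X³¹_P + (g_s/2)u_{2L}Y³¹_P − (g_s/2)u_{3L}X¹²_P − (g_s/2)u_{3L}Y¹²_P − g u′_{1L}W¹_P; d_{2L;P} = ∂_Pd_{2L} − g_s d_{2L}U²_P + g_s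 d_{3L}V²_P − g_s d_{1L}V²_P − g_s u_{2L}X³¹_P − (g_s/2)u_{3L}X¹²_P + (g_s/2)u_{3L}Y¹²_P − (g_s/2)u_{1L}X²³_P − (g_s/2)u_{1L}Y²³_P − g u′_{2L}W¹_P; d_{3L;P} = ∂_Pd_{3L} − g_s d_{3L}U³_P + g_s d_{1L}V³_P − g_s d_{2L}V³_P − g_s u_{3L}X¹²_P − (g_s/2)u_{1L}X²³_P + (g_s/2)u_{1L}Y²³_P − (g_s/2)u_{2L}X³¹_P − (g_s/2)u_{2L}Y³¹_P − g u′_{3L}W¹_P; d_{1R;P} = ∂_Pd_{1R} − g_s d_{1L}V¹_P + g_s d_{2L}U¹_P − g_s d_{3L}U¹_P + g_s u_{1L}Y²³_P + (g_s/2)u_{2L}X³¹_P − (g_s/2)u_{2L}Y³¹_P − (g_s/2)u_{3L}X¹²_P − (g_s/2)u_{3L}Y¹²_P; d_{2R;P} = ∂_Pd_{2R} − g_s d_{2L}V²_P + g_s d_{3L}U²_P − g_s d_{1L}U²_P + g_s u_{2L}Y³¹_P + (g_s/2)u_{3L}X¹²_P − (g_s/2)u_{3L}Y¹²_P − (g_s/2)u_{1L}X²³_P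 − (g_s/2)u_{1L}Y²³_P; d_{3R;P} = ∂_Pd_{3R} − g_s d_{3L}V³_P + g_s d_{1L}U³_P − g_s d_{2L}U³_P + g_s u_{3L}Y¹²_P + (g_s/2)u_{1L}X²³_P − (g_s/2)u_{1L}Y²³_P − (g_s/2)u_{2L}X³¹_P − (g_s/2)u_{2L}Y³¹_P; u_{1L;P} = ∂_Pu_{1L} − g_s u_{1L}U¹_P − (g_s/2)u_{2L}X¹²_P − (g_s/2)u_{2L}Y¹²_P − (g_s/2)u_{3L}X³¹_P + (g_s/2)u_{3L}Y³¹_P − g_s d_{1L}X²³_P + g_s d_{2L}Y²³_P − g_s d_{3L}Y²³_P − g d′_{1L}W¹_P; u_{2L;P} = ∂_Pu_{2L} − g_s u_{2L}U²_P − (g_s/2)u_{3L}X²³_P − (g_s/2)u_{3L}Y²³_P − (g_s/2)u_{1L}X¹²_P + (g_s/2)u_{1L}Y¹²_P − g_s d_{2L}X³¹_P + g_s d_{3L}Y³¹_P − g_s d_{1L}Y³¹_P − g d′_{2L}W¹_P; u_{3L;P} = ∂_Pu_{3L} − g_s u_{3L}U³_P − (g_s/2)u_{1L}X³¹_P − (g_s/2)u_{1L}Y³¹_P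 − (g_s/2)u_{2L}X²³_P + (g_s/2)u_{2L}Y²³_P − g_s d_{3L}X¹²_P + g_s d_{1L}Y¹²_P − g_s d_{2L}Y¹²_P − g d′_{3L}W¹_P; u_{1R;P} = ∂_Pu_{1R} − g_s u_{1R}U¹_P + (g_s/2)u_{2R}X¹²_P + (g_s/2)u_{2R}Y¹²_P + (g_s/2)u_{3R}X³¹_P − (g_s/2)u_{3R}Y³¹_P; u_{2R;P} = ∂_Pu_{2R} − g_s u_{2R}U²_P + (g_s/2)u_{3R}X²³_P + (g_s/2)u_{3R}Y²³_P + (g_s/2)u_{1R}X¹²_P − (g_s/2)u_{1R}Y¹²_P; u_{3R;P} = ∂_Pu_{3R} − g_s u_{3R}U³_P + (g_s/2)u_{1R}X³¹_P + (g_s/2)u_{1R}Y³¹_P + (g_s/2)u_{2R}X²³_P − (g_s/2)u_{2R}Y²³_P. -/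
noncomputable section

/-- **CKM mixing in the affine connection representation** (𝔇 = 8,
internal indices `0,…,4 ↦ 4,…,8`): under the basic symmetry conditions (a)
and the first (b) and second (c) conditions of CKM mixing, the down-type and
up-type color charges satisfy the stated twelve evolution equations with the
mixed fields `d′`, `u′`. -/
theorem stmt_6
    (U : Set (Fin 8 → ℝ)) (hU : IsOpen U)
    (ρ : Fin 5 → Fin 5 → (Fin 8 → ℝ) → ℝ)
    (hρ : ∀ m n, ∀ x ∈ U, DifferentiableAt ℝ (ρ m n) x)
    (Γ : Fin 5 → Fin 5 → Fin 8 → (Fin 8 → ℝ) → ℝ)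
    (G4 G5 G6 G7 G8 : ℝ) (hG45 : G4 = G5) (hG67 : G6 = G7) (hG78 : G7 = G8)
    (hG4pos : 0 < G4) (hG6pos : 0 < G6)
    (g : ℝ) (hg : g = Real.sqrt (G4 ^ 2 + G5 ^ 2))
    (gs : ℝ) (hgs : gs = Real.sqrt (G7 ^ 2 + G8 ^ 2))
    (Ginv : Fin 5 → ℝ) (hGinv : Ginv = ![G4, G5, G6, G7, G8])
    -- (a) basic symmetry conditions
    (ha1 : ∀ P : Fin 8, ∀ x ∈ U, Γ 0 1 P x = Γ 1 0 P x)
    (ha2 : ∀ P : Fin 8, ∀ x ∈ U, Γ 2 2 P x + Γ 3 3 P x + Γ 4 4 P x = 0)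
    -- (b) first conditions of CKM mixing (Γ^m_{nP} := G^{mm} Γ_{mnP})
    (cd64 cd74 cd84 cd65 cd75 cd85 : ℝ)
    (hb1 : ∀ P : Fin 8, ∀ x ∈ U, Ginv 1 * Γ 1 2 P x = cd64 * (Ginv 1 * Γ 1 0 P x))
    (hb2 : ∀ P : Fin 8, ∀ x ∈ U, Ginv 1 * Γ 1 3 P x = cd74 * (Ginv 1 * Γ 1 0 P x))
    (hb3 : ∀ P : Fin 8, ∀ x ∈ U, Ginv 1 * Γ 1 4 P x = cd84 * (Ginv 1 * Γ 1 0 P x))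
    (hb4 : ∀ P : Fin 8, ∀ x ∈ U, Ginv 0 * Γ 0 2 P x = cd65 * (Ginv 0 * Γ 0 1 P x))
    (hb5 : ∀ P : Fin 8, ∀ x ∈ U, Ginv 0 * Γ 0 3 P x = cd75 * (Ginv 0 * Γ 0 1 P x))
    (hb6 : ∀ P : Fin 8, ∀ x ∈ U, Ginv 0 * Γ 0 4 P x = cd85 * (Ginv 0 * Γ 0 1 P x))
    (hc1 : cd64 = cd74) (hc2 : cd74 = cd84)
    (hc3 : cd65 = cd75) (hc4 : cd75 = cd85)
    -- (c) second conditions of CKM mixing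
    (hr1 : ∀ x, ρ 2 1 x = ρ 3 1 x) (hr2 : ∀ x, ρ 3 1 x = ρ 4 1 x)
    (hr3 : ∀ x, ρ 2 0 x = ρ 3 0 x) (hr4 : ∀ x, ρ 3 0 x = ρ 4 0 x)
    (hr5 : ∀ x, ρ 1 2 x = ρ 1 3 x) (hr6 : ∀ x, ρ 1 3 x = ρ 1 4 x)
    (hr7 : ∀ x, ρ 0 2 x = ρ 0 3 x) (hr8 : ∀ x, ρ 0 3 x = ρ 0 4 x)
    -- down-type and up-type color charges
    (d1L d2L d3L d1R d2R d3R u1L u2L u3L u1R u2R u3R : (Fin 8 → ℝ) → ℝ)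
    (hd1L : ∀ x, d1L x = (ρ 2 2 x + ρ 3 3 x) / Real.sqrt 2)
    (hd2L : ∀ x, d2L x = (ρ 3 3 x + ρ 4 4 x) / Real.sqrt 2)
    (hd3L : ∀ x, d3L x = (ρ 4 4 x + ρ 2 2 x) / Real.sqrt 2)
    (hd1R : ∀ x, d1R x = (ρ 2 2 x - ρ 3 3 x) / Real.sqrt 2)
    (hd2R : ∀ x, d2R x = (ρ 3 3 x - ρ 4 4 x) / Real.sqrt 2)
    (hd3R : ∀ x, d3R x = (ρ 4 4 x - ρ 2 2 x) / Real.sqrt 2)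
    (hu1L : ∀ x, u1L x = (ρ 2 3 x + ρ 3 2 x) / Real.sqrt 2)
    (hu2L : ∀ x, u2L x = (ρ 3 4 x + ρ 4 3 x) / Real.sqrt 2)
    (hu3L : ∀ x, u3L x = (ρ 4 2 x + ρ 2 4 x) / Real.sqrt 2)
    (hu1R : ∀ x, u1R x = (ρ 2 3 x - ρ 3 2 x) / Real.sqrt 2)
    (hu2R : ∀ x, u2R x = (ρ 3 4 x - ρ 4 3 x) / Real.sqrt 2)
    (hu3R : ∀ x, u3R x = (ρ 4 2 x - ρ 2 4 x) / Real.sqrt 2)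
    -- gauge potentials
    (U1 V1 U2 V2 U3 V3 X23 Y23 X31 Y31 X12 Y12 W1 : Fin 8 → (Fin 8 → ℝ) → ℝ)
    (hU1 : ∀ P x, U1 P x = (Γ 2 2 P x + Γ 3 3 P x) / Real.sqrt 2)
    (hV1 : ∀ P x, V1 P x = (Γ 2 2 P x - Γ 3 3 P x) / Real.sqrt 2)
    (hU2 : ∀ P x, U2 P x = (Γ 3 3 P x + Γ 4 4 P x) / Real.sqrt 2)
    (hV2 : ∀ P x, V2 P x = (Γ 3 3 P x - Γ 4 4 P x) / Real.sqrt 2)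
    (hU3 : ∀ P x, U3 P x = (Γ 4 4 P x + Γ 2 2 P x) / Real.sqrt 2)
    (hV3 : ∀ P x, V3 P x = (Γ 4 4 P x - Γ 2 2 P x) / Real.sqrt 2)
    (hX23 : ∀ P x, X23 P x = (Γ 2 3 P x + Γ 3 2 P x) / Real.sqrt 2)
    (hY23 : ∀ P x, Y23 P x = (Γ 2 3 P x - Γ 3 2 P x) / Real.sqrt 2)
    (hX31 : ∀ P x, X31 P x = (Γ 3 4 P x + Γ 4 3 P x) / Real.sqrt 2)
    (hY31 : ∀ P x, Y31 P x = (Γ 3 4 P x - Γ 4 3 P x) / Real.sqrt 2)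
    (hX12 : ∀ P x, X12 P x = (Γ 4 2 P x + Γ 2 4 P x) / Real.sqrt 2)
    (hY12 : ∀ P x, Y12 P x = (Γ 4 2 P x - Γ 2 4 P x) / Real.sqrt 2)
    (hW1 : ∀ P x, W1 P x = (Γ 0 1 P x + Γ 1 0 P x) / Real.sqrt 2)
    -- mixing fields
    (d'1L d'2L d'3L u'1L u'2L u'3L : (Fin 8 → ℝ) → ℝ)
    (hd'1L : ∀ x, d'1L x = (1 / (2 * Real.sqrt 2)) *
      (cd75 * (ρ 0 2 x + ρ 2 0 x) + cd65 * (ρ 0 3 x + ρ 3 0 x)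
        + cd74 * (ρ 1 2 x + ρ 2 1 x) + cd64 * (ρ 1 3 x + ρ 3 1 x)))
    (hd'2L : ∀ x, d'2L x = (1 / (2 * Real.sqrt 2)) *
      (cd85 * (ρ 0 3 x + ρ 3 0 x) + cd75 * (ρ 0 4 x + ρ 4 0 x)
        + cd84 * (ρ 1 3 x + ρ 3 1 x) + cd74 * (ρ 1 4 x + ρ 4 1 x)))
    (hd'3L : ∀ x, d'3L x = (1 / (2 * Real.sqrt 2)) *
      (cd65 * (ρ 0 4 x + ρ 4 0 x) + cd85 * (ρ 0 2 x + ρ 2 0 x)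
        + cd64 * (ρ 1 4 x + ρ 4 1 x) + cd84 * (ρ 1 2 x + ρ 2 1 x)))
    (hu'1L : ∀ x, u'1L x = (1 / (2 * Real.sqrt 2)) *
      (cd65 * (ρ 0 2 x + ρ 2 0 x) + cd64 * (ρ 1 2 x + ρ 2 1 x)
        + cd75 * (ρ 0 3 x + ρ 3 0 x) + cd74 * (ρ 1 3 x + ρ 3 1 x)))
    (hu'2L : ∀ x, u'2L x = (1 / (2 * Real.sqrt 2)) *
      (cd75 * (ρ 0 3 x + ρ 3 0 x) + cd74 * (ρ 1 3 x + ρ 3 1 x)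
        + cd85 * (ρ 0 4 x + ρ 4 0 x) + cd84 * (ρ 1 4 x + ρ 4 1 x)))
    (hu'3L : ∀ x, u'3L x = (1 / (2 * Real.sqrt 2)) *
      (cd85 * (ρ 0 4 x + ρ 4 0 x) + cd84 * (ρ 1 4 x + ρ 4 1 x)
        + cd65 * (ρ 0 2 x + ρ 2 0 x) + cd64 * (ρ 1 2 x + ρ 2 1 x))) :
    ∀ x ∈ U, ∀ P : Fin 8,
      ((covD Ginv Γ ρ 2 2 P x + covD Ginv Γ ρ 3 3 P x) / Real.sqrt 2
          = pd P d1L x - gs * d1L x * U1 P x + gs * d2L x * V1 P x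
            - gs * d3L x * V1 P x - gs * u1L x * X23 P x
            - (gs / 2) * u2L x * X31 P x + (gs / 2) * u2L x * Y31 P x
            - (gs / 2) * u3L x * X12 P x - (gs / 2) * u3L x * Y12 P x
            - g * u'1L x * W1 P x) ∧
      ((covD Ginv Γ ρ 3 3 P x + covD Ginv Γ ρ 4 4 P x) / Real.sqrt 2
          = pd P d2L x - gs * d2L x * U2 P x + gs * d3L x * V2 P x
            - gs * d1L x * V2 P x - gs * u2L x * X31 P x
            - (gs / 2) * u3L x * X12 P x + (gs / 2) * u3L x * Y12 P x
            - (gs / 2) * u1L x * X23 P x - (gs / 2) * u1L x * Y23 P x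
            - g * u'2L x * W1 P x) ∧
      ((covD Ginv Γ ρ 4 4 P x + covD Ginv Γ ρ 2 2 P x) / Real.sqrt 2
          = pd P d3L x - gs * d3L x * U3 P x + gs * d1L x * V3 P x
            - gs * d2L x * V3 P x - gs * u3L x * X12 P x
            - (gs / 2) * u1L x * X23 P x + (gs / 2) * u1L x * Y23 P x
            - (gs / 2) * u2L x * X31 P x - (gs / 2) * u2L x * Y31 P x
            - g * u'3L x * W1 P x) ∧
      ((covD Ginv Γ ρ 2 2 P x - covD Ginv Γ ρ 3 3 P x) / Real.sqrt 2
          = pd P d1R x - gs * d1L x * V1 P x + gs * d2L x * U1 P x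
            - gs * d3L x * U1 P x + gs * u1L x * Y23 P x
            + (gs / 2) * u2L x * X31 P x - (gs / 2) * u2L x * Y31 P x
            - (gs / 2) * u3L x * X12 P x - (gs / 2) * u3L x * Y12 P x) ∧
      ((covD Ginv Γ ρ 3 3 P x - covD Ginv Γ ρ 4 4 P x) / Real.sqrt 2
          = pd P d2R x - gs * d2L x * V2 P x + gs * d3L x * U2 P x
            - gs * d1L x * U2 P x + gs * u2L x * Y31 P x
            + (gs / 2) * u3L x * X12 P x - (gs / 2) * u3L x * Y12 P x
            - (gs / 2) * u1L x * X23 P x - (gs / 2) * u1L x * Y23 P x) ∧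
      ((covD Ginv Γ ρ 4 4 P x - covD Ginv Γ ρ 2 2 P x) / Real.sqrt 2
          = pd P d3R x - gs * d3L x * V3 P x + gs * d1L x * U3 P x
            - gs * d2L x * U3 P x + gs * u3L x * Y12 P x
            + (gs / 2) * u1L x * X23 P x - (gs / 2) * u1L x * Y23 P x
            - (gs / 2) * u2L x * X31 P x - (gs / 2) * u2L x * Y31 P x) ∧
      ((covD Ginv Γ ρ 2 3 P x + covD Ginv Γ ρ 3 2 P x) / Real.sqrt 2
          = pd P u1L x - gs * u1L x * U1 P x
            - (gs / 2) * u2L x * X12 P x - (gs / 2) * u2L x * Y12 P x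
            - (gs / 2) * u3L x * X31 P x + (gs / 2) * u3L x * Y31 P x
            - gs * d1L x * X23 P x + gs * d2L x * Y23 P x - gs * d3L x * Y23 P x
            - g * d'1L x * W1 P x) ∧
      ((covD Ginv Γ ρ 3 4 P x + covD Ginv Γ ρ 4 3 P x) / Real.sqrt 2
          = pd P u2L x - gs * u2L x * U2 P x
            - (gs / 2) * u3L x * X23 P x - (gs / 2) * u3L x * Y23 P x
            - (gs / 2) * u1L x * X12 P x + (gs / 2) * u1L x * Y12 P x
            - gs * d2L x * X31 P x + gs * d3L x * Y31 P x - gs * d1L x * Y31 P x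
            - g * d'2L x * W1 P x) ∧
      ((covD Ginv Γ ρ 4 2 P x + covD Ginv Γ ρ 2 4 P x) / Real.sqrt 2
          = pd P u3L x - gs * u3L x * U3 P x
            - (gs / 2) * u1L x * X31 P x - (gs / 2) * u1L x * Y31 P x
            - (gs / 2) * u2L x * X23 P x + (gs / 2) * u2L x * Y23 P x
            - gs * d3L x * X12 P x + gs * d1L x * Y12 P x - gs * d2L x * Y12 P x
            - g * d'3L x * W1 P x) ∧
      ((covD Ginv Γ ρ 2 3 P x - covD Ginv Γ ρ 3 2 P x) / Real.sqrt 2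
          = pd P u1R x - gs * u1R x * U1 P x
            + (gs / 2) * u2R x * X12 P x + (gs / 2) * u2R x * Y12 P x
            + (gs / 2) * u3R x * X31 P x - (gs / 2) * u3R x * Y31 P x) ∧
      ((covD Ginv Γ ρ 3 4 P x - covD Ginv Γ ρ 4 3 P x) / Real.sqrt 2
          = pd P u2R x - gs * u2R x * U2 P x
            + (gs / 2) * u3R x * X23 P x + (gs / 2) * u3R x * Y23 P x
            + (gs / 2) * u1R x * X12 P x - (gs / 2) * u1R x * Y12 P x) ∧
      ((covD Ginv Γ ρ 4 2 P x - covD Ginv Γ ρ 2 4 P x) / Real.sqrt 2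
          = pd P u3R x - gs * u3R x * U3 P x
            + (gs / 2) * u1R x * X31 P x + (gs / 2) * u1R x * Y31 P x
            + (gs / 2) * u2R x * X23 P x - (gs / 2) * u2R x * Y23 P x) := by
  intro x hx P
  have hG0 : 0 ≤ G4 := hG4pos.le
  subst hG45 hG67 hG78 hc1 hc2 hc3 hc4
  have hs2 : Real.sqrt 2 * Real.sqrt 2 = 2 := Real.mul_self_sqrt (by norm_num)
  have hs0 : Real.sqrt 2 ≠ 0 := by positivity
  have hgv : g = Real.sqrt 2 * G4 := by
    rw [hg, ← two_mul, Real.sqrt_mul (by norm_num), Real.sqrt_sq hG4pos.le]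
  have hgsv : gs = Real.sqrt 2 * G6 := by
    rw [hgs, ← two_mul, Real.sqrt_mul (by norm_num), Real.sqrt_sq hG6pos.le]
  have e0 : Ginv 0 = G4 := by rw [hGinv]; rfl
  have e1 : Ginv 1 = G4 := by rw [hGinv]; rfl
  have e2 : Ginv 2 = G6 := by rw [hGinv]; rfl
  have e3 : Ginv 3 = G6 := by rw [hGinv]; rfl
  have e4 : Ginv 4 = G6 := by rw [hGinv]; rfl
  have b1 := hb1 P x hx
  have b2 := hb2 P x hx
  have b3 := hb3 P x hx
  have b4 := hb4 P x hx
  have b5 := hb5 P x hx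
  have b6 := hb6 P x hx
  have a1 := ha1 P x hx
  have padd : ∀ (f : (Fin 8 → ℝ) → ℝ) (a b c d : Fin 5),
      (∀ x, f x = (ρ a b x + ρ c d x) / Real.sqrt 2) →
      pd P f x = (pd P (ρ a b) x + pd P (ρ c d) x) / Real.sqrt 2 := by
    intro f a b c d h
    have h1 : HasFDerivAt f ((Real.sqrt 2)⁻¹ • (fderiv ℝ (ρ a b) x + fderiv ℝ (ρ c d) x)) x := by
      have h2 := ((hρ a b x hx).hasFDerivAt.add (hρ c d x hx).hasFDerivAt).const_smul
        (Real.sqrt 2)⁻¹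
      refine h2.congr_of_eventuallyEq (Filter.Eventually.of_forall fun y => ?_)
      simp [h y, div_eq_inv_mul]
    simp [pd, h1.fderiv, div_eq_inv_mul, mul_add]
  have psub : ∀ (f : (Fin 8 → ℝ) → ℝ) (a b c d : Fin 5),
      (∀ x, f x = (ρ a b x - ρ c d x) / Real.sqrt 2) →
      pd P f x = (pd P (ρ a b) x - pd P (ρ c d) x) / Real.sqrt 2 := by
    intro f a b c d h
    have h1 : HasFDerivAt f ((Real.sqrt 2)⁻¹ • (fderiv ℝ (ρ a b) x - fderiv ℝ (ρ c d) x)) x := by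
      have h2 := ((hρ a b x hx).hasFDerivAt.sub (hρ c d x hx).hasFDerivAt).const_smul
        (Real.sqrt 2)⁻¹
      refine h2.congr_of_eventuallyEq (Filter.Eventually.of_forall fun y => ?_)
      simp [h y, div_eq_inv_mul]
    simp [pd, h1.fderiv, div_eq_inv_mul]
  have hinv : (Real.sqrt 2)⁻¹ = Real.sqrt 2 / 2 := by
    rw [inv_eq_iff_eq_inv, inv_div, eq_div_iff hs0, hs2]
  have hs3 : Real.sqrt 2 ^ 3 = 2 * Real.sqrt 2 := by linear_combination Real.sqrt 2 * hs2
  have hs4 : Real.sqrt 2 ^ 4 = 4 := by linear_combination (Real.sqrt 2 ^ 2 + 2) * hs2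
  have hsq : Real.sqrt 2 ^ 2 = 2 := by linear_combination hs2
  simp only [padd _ _ _ _ _ hd1L, padd _ _ _ _ _ hd2L, padd _ _ _ _ _ hd3L,
    padd _ _ _ _ _ hu1L, padd _ _ _ _ _ hu2L, padd _ _ _ _ _ hu3L,
    psub _ _ _ _ _ hd1R, psub _ _ _ _ _ hd2R, psub _ _ _ _ _ hd3R,
    psub _ _ _ _ _ hu1R, psub _ _ _ _ _ hu2R, psub _ _ _ _ _ hu3R]
  simp only [covD, Fin.sum_univ_five, b1, b2, b3, b4, b5, b6]
  simp only [e0, e1, e2, e3, e4, ← a1, hd1L, hd2L, hd3L, hu1L, hu2L, hu3L, hu1R, hu2R, hu3R,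
    hU1, hV1, hU2, hV2, hU3, hV3, hX23, hY23, hX31, hY31, hX12, hY12, hW1,
    hd'1L, hd'2L, hd'3L, hu'1L, hu'2L, hu'3L, hgv, hgsv,
    hr1, hr2, hr3, hr4, hr5, hr6, hr7, hr8, one_div, mul_inv, div_eq_mul_inv, hinv]
  refine ⟨?_, ?_, ?_, ?_, ?_, ?_, ?_, ?_, ?_, ?_, ?_, ?_⟩ <;>
  · ring_nf
    simp only [hs3, hs4, hsq]
    ring


end
end
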